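/- Let 0<α<1 and β:=1/α. There exists a constant M₀>0 depending only on β such that for every ε∈(0,M₀) there is n₀ with the following property: for all integers n≥n₀ and m with 1 ≤ m ≤ (M₀−ε)·n^{β/(β+1)}, the system n = ∑_{k≥1} k·g(k)/(e^{kr−ρ}+1), m = ∑_{k≥1} g(k)/(e^{kr−ρ}+1) has a unique solution (r,ρ) with r>0 and ρ∈ℝ. -/

import Mathlib

open Real

/-- `g α k` is the number of positive integers `n` with `⌊n^α⌋ = k`. -/
noncomputable def g (α : ℝ) (k : ℕ) : ℕ :=
  Set.ncard {n : ℕ | 1 ≤ n ∧ ⌊(n : ℝ) ^ α⌋ = (k : ℤ)}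

/-!
Read the sums as particle number and energy of free fermions on the levels `⌊1 ^ α⌋, ⌊2 ^ α⌋, …`
at inverse temperature `r` and fugacity `exp ρ`. The particle number increases with `ρ` from `0` to
`∞`, so fixing it to be `m` defines a continuous curve `ρ = R r`. Along this curve the energy tends
to `∞` as `r → 0`, since every finite set of levels then holds a negligible share of the particles;
by the intermediate value theorem it suffices to find one `r` at which the energy is at most `n`.
Take `r = n ^ (-1 / (β + 1))`. About `r ^ (-β)` levels lie below `1 / r`, so `m ≤ M₀ * r ^ (-β)`
forces the fugacity to be small, and comparing the Boltzmann sum with a Gamma integral bounds the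
energy by `r ^ (-β - 1) = n`. Uniqueness holds because occupation numbers are strictly monotone.
-/

open Filter Topology

theorem sigmoid_le_exp (x : ℝ) : sigmoid x ≤ exp x := by
  rw [sigmoid_def, ← inv_inv (exp x), ← exp_neg]
  gcongr
  linarith

theorem exp_neg_mul_sigmoid_le {x : ℝ} (hx : 0 ≤ x) (y : ℝ) :
    exp (-x) * sigmoid y ≤ sigmoid (y - x) := by
  rw [sigmoid_def, sigmoid_def, exp_neg x, ← mul_inv, neg_sub, sub_eq_add_neg, exp_add]
  gcongr
  linarith [one_le_exp hx]

theorem exp_le_inv_of_sigmoid_le {x c : ℝ} (hc : 0 < c) (h : sigmoid x ≤ (1 + c)⁻¹) :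
    exp x ≤ c⁻¹ := by
  rw [sigmoid_def, inv_le_inv₀ (by positivity) (by positivity), exp_neg] at h
  exact (le_inv_comm₀ hc (exp_pos x)).1 (by linarith)

theorem inv_exp_sub_add_one (x y : ℝ) : (exp (x - y) + 1)⁻¹ = sigmoid (y - x) := by
  rw [sigmoid_def, neg_sub, add_comm]

theorem mul_exp_neg_mul_le {r : ℝ} (hr : 0 < r) (x : ℝ) :
    x * exp (-(x * r)) ≤ 2 / r * exp (-(x * (r / 2))) := by
  have hx : x ≤ 2 / r * exp (x * (r / 2)) := by
    rw [div_mul_eq_mul_div, le_div_iff₀ hr]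
    linarith [add_one_le_exp (x * (r / 2))]
  calc x * exp (-(x * r)) ≤ 2 / r * exp (x * (r / 2)) * exp (-(x * r)) := by gcongr
    _ = 2 / r * exp (-(x * (r / 2))) := by rw [mul_assoc, ← exp_add]; ring_nf

theorem eq_of_hasSum_sub_mul_sub_eq_zero {ι : Type*} {f : ℝ → ℝ} (hf : StrictMono f)
    {x y : ι → ℝ} (h : HasSum (fun i => (x i - y i) * (f (x i) - f (y i))) 0) : x = y := by
  have hnonneg (i : ι) : 0 ≤ (x i - y i) * (f (x i) - f (y i)) := by
    rcases le_total (x i) (y i) with hxy | hxy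
    · exact mul_nonneg_of_nonpos_of_nonpos (sub_nonpos.2 hxy) (sub_nonpos.2 (hf.monotone hxy))
    · exact mul_nonneg (sub_nonneg.2 hxy) (sub_nonneg.2 (hf.monotone hxy))
  have hzero := (hasSum_zero_iff_of_nonneg hnonneg).1 h
  funext i
  rcases mul_eq_zero.1 (congrFun hzero i) with hi | hi
  · exact sub_eq_zero.1 hi
  · exact hf.injective (sub_eq_zero.1 hi)

theorem tendsto_of_monotone_of_eventually_eq {X T C : Type*} [LinearOrder T] [TopologicalSpace T]
    [OrderTopology T] [LinearOrder C] [TopologicalSpace C] [OrderClosedTopology C]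
    {F : X → T → C} {G : T → C} {φ : X → T} {l : Filter X} {t : T} (hG : StrictMono G)
    (hF : ∀ᶠ x in l, Monotone (F x)) (hFG : ∀ s, Tendsto (F · s) l (𝓝 (G s)))
    (hφ : ∀ᶠ x in l, F x (φ x) = G t) : Tendsto φ l (𝓝 t) := by
  refine tendsto_order.2 ⟨fun s hs => ?_, fun s hs => ?_⟩
  · filter_upwards [hF, hφ, (hFG s).eventually_lt_const (hG hs)] with x hx hxt hxs
    exact hx.reflect_lt (hxs.trans_eq hxt.symm)
  · filter_upwards [hF, hφ, (hFG s).eventually_const_lt (hG hs)] with x hx hxt hxs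
    exact hx.reflect_lt (hxt.trans_lt hxs)

theorem tsum_card_fiber_mul {ι κ : Type*} (f : ι → κ) {h : κ → ℝ}
    (hs : Summable fun i => h (f i)) :
    ∑' k, (Nat.card (f ⁻¹' {k}) : ℝ) * h k = ∑' i, h (f i) := by
  rw [← (hs.hasSum.tsum_fiberwise f).tsum_eq]
  refine tsum_congr fun k => ?_
  have hconst (i : f ⁻¹' {k}) : h (f i) = h k := congrArg h i.2
  simp only [hconst, tsum_const, nsmul_eq_mul]

/-- The weighted Boltzmann sums `∑ w i * exp (-(a i * r))` converge at every inverse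
temperature `r > 0`. -/
def BoltzmannSummable {ι : Type*} (w a : ι → ℝ) : Prop :=
  ∀ r : ℝ, 0 < r → Summable fun i => w i * exp (-(a i * r))

/-- The expectation of the additive observable `w` for free fermions on the levels `a`: level `i`
is occupied with probability `sigmoid (ρ - a i * r) = 1 / (exp (a i * r - ρ) + 1)`. The weight
`w = 1` gives the number of particles, `w = a` the energy. -/
noncomputable def fermiSum {ι : Type*} (w a : ι → ℝ) (r ρ : ℝ) : ℝ :=
  ∑' i, w i * sigmoid (ρ - a i * r)

section FermiSum

variable {ι : Type*} {w a : ι → ℝ} {r : ℝ}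

theorem BoltzmannSummable.self (ha : 0 ≤ a) (h : BoltzmannSummable 1 a) :
    BoltzmannSummable a a := fun r hr => by
  have hs : Summable fun i => 2 / r * (1 * exp (-(a i * (r / 2)))) :=
    (h (r / 2) (half_pos hr)).mul_left _
  refine hs.of_nonneg_of_le (fun i => mul_nonneg (ha i) (exp_pos _).le) fun i => ?_
  rw [one_mul]
  exact mul_exp_neg_mul_le hr (a i)

theorem BoltzmannSummable.tendsto_cofinite (h : BoltzmannSummable 1 a) :
    Tendsto a cofinite atTop := by
  have hexp := (h 1 one_pos).tendsto_cofinite_zero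
  simp only [Pi.one_apply, one_mul, mul_one] at hexp
  exact tendsto_neg_atBot_iff.1 (tendsto_exp_comp_nhds_zero.1 hexp)

theorem mul_sigmoid_sub_le (hw : 0 ≤ w) (r ρ : ℝ) (i : ι) :
    w i * sigmoid (ρ - a i * r) ≤ exp ρ * (w i * exp (-(a i * r))) :=
  calc w i * sigmoid (ρ - a i * r) ≤ w i * exp (ρ - a i * r) :=
        mul_le_mul_of_nonneg_left (sigmoid_le_exp _) (hw i)
    _ = exp ρ * (w i * exp (-(a i * r))) := by rw [sub_eq_add_neg, exp_add]; ring

theorem BoltzmannSummable.summable_mul_sigmoid (h : BoltzmannSummable w a) (hw : 0 ≤ w)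
    (hr : 0 < r) (ρ : ℝ) : Summable fun i => w i * sigmoid (ρ - a i * r) :=
  ((h r hr).mul_left (exp ρ)).of_nonneg_of_le
    (fun i => mul_nonneg (hw i) (sigmoid_nonneg _)) (mul_sigmoid_sub_le hw r ρ)

theorem BoltzmannSummable.fermiSum_le (h : BoltzmannSummable w a) (hw : 0 ≤ w) (hr : 0 < r)
    (ρ : ℝ) : fermiSum w a r ρ ≤ exp ρ * ∑' i, w i * exp (-(a i * r)) := by
  rw [← tsum_mul_left]
  exact (h.summable_mul_sigmoid hw hr ρ).tsum_le_tsum (mul_sigmoid_sub_le hw r ρ)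
    ((h r hr).mul_left _)

theorem fermiSum_nonneg (hw : 0 ≤ w) (r ρ : ℝ) : 0 ≤ fermiSum w a r ρ :=
  tsum_nonneg fun i => mul_nonneg (hw i) (sigmoid_nonneg _)

theorem BoltzmannSummable.sum_le_fermiSum (h : BoltzmannSummable w a) (hw : 0 ≤ w) (hr : 0 < r)
    (ρ : ℝ) (s : Finset ι) : ∑ i ∈ s, w i * sigmoid (ρ - a i * r) ≤ fermiSum w a r ρ :=
  (h.summable_mul_sigmoid hw hr ρ).sum_le_tsum s
    fun i _ => mul_nonneg (hw i) (sigmoid_nonneg _)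

theorem BoltzmannSummable.continuousAt_fermiSum (h : BoltzmannSummable w a) (hw : 0 ≤ w)
    (ha : 0 ≤ a) (hr : 0 < r) (ρ : ℝ) :
    ContinuousAt (fun p : ℝ × ℝ => fermiSum w a p.1 p.2) (r, ρ) := by
  have hbound (i : ι) (p : ℝ × ℝ) (hp : p ∈ Set.Ioi (r / 2) ×ˢ Set.Iio (ρ + 1)) :
      ‖w i * sigmoid (p.2 - a i * p.1)‖ ≤ exp (ρ + 1) * (w i * exp (-(a i * (r / 2)))) := by
    rw [norm_of_nonneg (mul_nonneg (hw i) (sigmoid_nonneg _))]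
    have hp₁ : a i * (r / 2) ≤ a i * p.1 := mul_le_mul_of_nonneg_left hp.1.le (ha i)
    have hp₂ : p.2 ≤ ρ + 1 := hp.2.le
    have hwi : 0 ≤ w i := hw i
    calc w i * sigmoid (p.2 - a i * p.1) ≤ exp p.2 * (w i * exp (-(a i * p.1))) :=
          mul_sigmoid_sub_le hw p.1 p.2 i
      _ ≤ exp (ρ + 1) * (w i * exp (-(a i * (r / 2)))) := by gcongr
  have hcont (i : ι) : Continuous fun p : ℝ × ℝ => w i * sigmoid (p.2 - a i * p.1) :=
    continuous_const.mul (continuous_sigmoid.comp (by fun_prop))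
  refine (continuousOn_tsum (fun i => (hcont i).continuousOn)
    ((h (r / 2) (half_pos hr)).mul_left _) hbound).continuousAt ?_
  exact prod_mem_nhds (Ioi_mem_nhds (half_lt_self hr)) (Iio_mem_nhds (lt_add_one ρ))

theorem BoltzmannSummable.strictMono_fermiSum (h : BoltzmannSummable w a) (hw : 0 < w)
    (hr : 0 < r) : StrictMono (fermiSum w a r) := by
  intro ρ ρ' hρ
  have hlt (i : ι) : sigmoid (ρ - a i * r) < sigmoid (ρ' - a i * r) :=
    sigmoid_strictMono (sub_lt_sub_right hρ _)
  obtain ⟨hw₀, i, hi⟩ := Pi.lt_def.1 hw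
  exact Summable.tsum_lt_tsum (i := i)
    (fun j => mul_le_mul_of_nonneg_left (hlt j).le (hw₀ j))
    (mul_lt_mul_of_pos_left (hlt i) hi)
    (h.summable_mul_sigmoid hw₀ hr ρ) (h.summable_mul_sigmoid hw₀ hr ρ')

theorem BoltzmannSummable.tendsto_fermiSum_atBot (h : BoltzmannSummable w a) (hw : 0 ≤ w)
    (hr : 0 < r) : Tendsto (fermiSum w a r) atBot (𝓝 0) := by
  have hexp := tendsto_exp_atBot.mul_const (∑' i, w i * exp (-(a i * r)))
  rw [zero_mul] at hexp
  exact squeeze_zero (fermiSum_nonneg hw r) (h.fermiSum_le hw hr) hexp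

theorem BoltzmannSummable.tendsto_fermiSum_one_atTop [Infinite ι] (h : BoltzmannSummable 1 a)
    (hr : 0 < r) : Tendsto (fermiSum 1 a r) atTop atTop := by
  refine tendsto_atTop.2 fun b => ?_
  obtain ⟨k, hk⟩ := exists_nat_gt b
  obtain ⟨s, hs⟩ := Infinite.exists_subset_card_eq ι k
  have hlim : Tendsto (fun ρ => ∑ i ∈ s, (1 : ι → ℝ) i * sigmoid (ρ - a i * r)) atTop (𝓝 k) := by
    have hsum : (k : ℝ) = ∑ i ∈ s, (1 : ι → ℝ) i * 1 := by simp [hs]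
    rw [hsum]
    refine tendsto_finsetSum s fun i _ => Tendsto.const_mul _ ?_
    exact tendsto_sigmoid_atTop.comp (tendsto_atTop_add_const_right _ _ tendsto_id)
  filter_upwards [hlim.eventually_const_lt hk] with ρ hρ
  exact hρ.le.trans (h.sum_le_fermiSum zero_le_one hr ρ s)

theorem BoltzmannSummable.exists_fermiSum_one_eq [Infinite ι] (h : BoltzmannSummable 1 a)
    (ha : 0 ≤ a) (hr : 0 < r) {m : ℝ} (hm : 0 < m) : ∃ ρ, fermiSum 1 a r ρ = m := by
  have hcont : Continuous (fermiSum 1 a r) := continuous_iff_continuousAt.2 fun ρ =>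
    (h.continuousAt_fermiSum zero_le_one ha hr ρ).comp (f := fun ρ => (r, ρ)) (by fun_prop)
  refine mem_range_of_exists_le_of_exists_ge hcont ?_ ?_
  · exact ((h.tendsto_fermiSum_atBot zero_le_one hr).eventually_le_const hm).exists
  · exact ((h.tendsto_fermiSum_one_atTop hr).eventually_ge_atTop m).exists

theorem BoltzmannSummable.continuousOn_of_fermiSum_eq (h : BoltzmannSummable w a) (hw : 0 < w)
    (ha : 0 ≤ a) {m : ℝ} {R : ℝ → ℝ} (hR : ∀ r, 0 < r → fermiSum w a r (R r) = m) :
    ContinuousOn R (Set.Ioi 0) := by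
  intro r hr
  refine Tendsto.mono_left ?_ nhdsWithin_le_nhds
  refine tendsto_of_monotone_of_eventually_eq (F := fermiSum w a)
    (h.strictMono_fermiSum hw hr) ?_ (fun ρ => ?_) ?_
  · filter_upwards [Ioi_mem_nhds hr] with s hs using (h.strictMono_fermiSum hw hs).monotone
  · exact (h.continuousAt_fermiSum hw.le ha hr ρ).comp (f := fun s => (s, ρ)) (by fun_prop)
  · filter_upwards [Ioi_mem_nhds hr] with s hs
    rw [hR s hs, hR r hr]

theorem BoltzmannSummable.injOn_fermiSum (h : BoltzmannSummable 1 a) (ha : 0 ≤ a) {i j : ι}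
    (hij : a i ≠ a j) :
    Set.InjOn (fun p : ℝ × ℝ => (fermiSum a a p.1 p.2, fermiSum 1 a p.1 p.2))
      {p | 0 < p.1} := by
  rintro ⟨r, ρ⟩ hr ⟨s, σ⟩ hs heq
  obtain ⟨henergy, hcount⟩ := Prod.mk.inj heq
  have hsum {w : ι → ℝ} (hws : BoltzmannSummable w a) (hw : 0 ≤ w)
      (heq : fermiSum w a r ρ = fermiSum w a s σ) :
      HasSum (fun k => w k * sigmoid (ρ - a k * r) - w k * sigmoid (σ - a k * s)) 0 := by
    simpa only [← sub_eq_zero.2 heq] using! (hws.summable_mul_sigmoid hw hr ρ).hasSum.sub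
      (hws.summable_mul_sigmoid hw hs σ).hasSum
  -- Weighting the two equations by `ρ - σ` and `r - s` pairs each difference of occupation
  -- numbers with the difference of their arguments, so no cancellation is possible.
  have hpair : HasSum (fun k => ((ρ - a k * r) - (σ - a k * s)) *
      (sigmoid (ρ - a k * r) - sigmoid (σ - a k * s))) 0 := by
    convert! ((hsum h zero_le_one hcount).mul_left (ρ - σ)).sub
      ((hsum (h.self ha) ha henergy).mul_left (r - s)) using 1
    · funext k
      simp only [Pi.one_apply]
      ring
    · ring
  have hlevel (k : ι) : ρ - a k * r = σ - a k * s :=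
    congrFun (eq_of_hasSum_sub_mul_sub_eq_zero sigmoid_strictMono hpair) k
  have hrs : r = s := by
    refine mul_left_cancel₀ (sub_ne_zero.2 hij) ?_
    linear_combination hlevel j - hlevel i
  subst hrs
  exact Prod.ext rfl (by simpa only [sub_left_inj] using hlevel i)

theorem BoltzmannSummable.card_mul_sigmoid_le_fermiSum_one (h : BoltzmannSummable 1 a)
    (ha : 0 ≤ a) (hr : 0 < r) (ρ : ℝ) {s : Finset ι} (hs : ∀ i ∈ s, a i * r ≤ 1) :
    s.card * (exp (-1) * sigmoid ρ) ≤ fermiSum 1 a r ρ := by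
  refine le_trans ?_ (h.sum_le_fermiSum zero_le_one hr ρ s)
  rw [← nsmul_eq_mul]
  refine s.card_nsmul_le_sum _ _ fun i hi => ?_
  calc exp (-1) * sigmoid ρ ≤ exp (-(a i * r)) * sigmoid ρ := by
        gcongr
        · exact sigmoid_nonneg ρ
        · exact hs i hi
    _ ≤ sigmoid (ρ - a i * r) := exp_neg_mul_sigmoid_le (mul_nonneg (ha i) hr.le) ρ
    _ = (1 : ι → ℝ) i * sigmoid (ρ - a i * r) := (one_mul _).symm

theorem BoltzmannSummable.exists_mul_sum_sigmoid_le_fermiSum_one [Infinite ι]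
    (h : BoltzmannSummable 1 a) (ha : 0 ≤ a) (s : Finset ι) {c : ℝ} (hc : 0 ≤ c) :
    ∃ r > 0, ∀ ρ, c * ∑ i ∈ s, sigmoid (ρ - a i * r) ≤ fermiSum 1 a r ρ := by
  obtain ⟨k, hk⟩ := exists_nat_ge (c * s.card * exp 1)
  obtain ⟨t, ht⟩ := Infinite.exists_subset_card_eq ι k
  have hA : 0 ≤ ∑ i ∈ t, a i := Finset.sum_nonneg fun i _ => ha i
  have hr : 0 < (1 + ∑ i ∈ t, a i)⁻¹ := by positivity
  refine ⟨_, hr, fun ρ => ?_⟩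
  have hlow : ∀ i ∈ t, a i * (1 + ∑ i ∈ t, a i)⁻¹ ≤ 1 := fun i hi => by
    have hi := Finset.single_le_sum (fun j _ => ha j) hi
    rw [mul_inv_le_iff₀ (by positivity)]
    linarith
  have hsig : ∑ i ∈ s, sigmoid (ρ - a i * (1 + ∑ i ∈ t, a i)⁻¹) ≤ s.card * sigmoid ρ := by
    rw [← nsmul_eq_mul]
    exact s.sum_le_card_nsmul _ _ fun i _ =>
      sigmoid_le (sub_le_self ρ (mul_nonneg (ha i) hr.le))
  calc c * ∑ i ∈ s, sigmoid (ρ - a i * (1 + ∑ i ∈ t, a i)⁻¹) ≤ c * (s.card * sigmoid ρ) := by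
        gcongr
    _ = c * s.card * exp 1 * (exp (-1) * sigmoid ρ) := by
        rw [exp_neg]
        field_simp
    _ ≤ t.card * (exp (-1) * sigmoid ρ) := by
        rw [ht]
        have := sigmoid_nonneg ρ
        gcongr
    _ ≤ fermiSum 1 a _ ρ := h.card_mul_sigmoid_le_fermiSum_one ha hr ρ hlow

theorem BoltzmannSummable.exists_mul_fermiSum_one_le_fermiSum_self [Infinite ι]
    (h : BoltzmannSummable 1 a) (ha : 0 ≤ a) {c : ℝ} (hc : 0 ≤ c) :
    ∃ r > 0, ∀ ρ, c * fermiSum 1 a r ρ ≤ fermiSum a a r ρ := by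
  -- At high temperature at most half of the particles sit below energy `2 * c`.
  have hfin : {i | ¬ 2 * c ≤ a i}.Finite := h.tendsto_cofinite.eventually_ge_atTop (2 * c)
  obtain ⟨r, hr, hhalf⟩ := h.exists_mul_sum_sigmoid_le_fermiSum_one ha hfin.toFinset zero_le_two
  refine ⟨r, hr, fun ρ => ?_⟩
  have hexcess : HasSum (fun i => (a i - 2 * c) * sigmoid (ρ - a i * r))
      (fermiSum a a r ρ - 2 * c * fermiSum 1 a r ρ) := by
    convert! ((h.self ha).summable_mul_sigmoid ha hr ρ).hasSum.sub
      ((h.summable_mul_sigmoid zero_le_one hr ρ).hasSum.mul_left (2 * c)) using 2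
    simp only [Pi.one_apply]
    ring
  have hfinite : ∑ i ∈ hfin.toFinset, (a i - 2 * c) * sigmoid (ρ - a i * r) ≤
      fermiSum a a r ρ - 2 * c * fermiSum 1 a r ρ :=
    sum_le_hasSum _ (fun i hi => mul_nonneg (by simpa using hi) (sigmoid_nonneg _)) hexcess
  have hdeficit : -(2 * c) * ∑ i ∈ hfin.toFinset, sigmoid (ρ - a i * r) ≤
      ∑ i ∈ hfin.toFinset, (a i - 2 * c) * sigmoid (ρ - a i * r) := by
    rw [Finset.mul_sum]
    refine Finset.sum_le_sum fun i _ => mul_le_mul_of_nonneg_right ?_ (sigmoid_nonneg _)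
    linarith [show 0 ≤ a i from ha i]
  linarith [mul_le_mul_of_nonneg_left (hhalf ρ) hc]

theorem BoltzmannSummable.existsUnique_fermiSum_eq [Infinite ι] (h : BoltzmannSummable 1 a)
    (ha : 0 ≤ a) {n m : ℝ} (hm : 0 < m) {r₀ : ℝ} (hr₀ : 0 < r₀)
    (hn : ∀ ρ, fermiSum 1 a r₀ ρ = m → fermiSum a a r₀ ρ ≤ n) :
    ∃! p : ℝ × ℝ, 0 < p.1 ∧ n = fermiSum a a p.1 p.2 ∧ m = fermiSum 1 a p.1 p.2 := by
  choose! R hR using fun r (hr : 0 < r) => h.exists_fermiSum_one_eq ha hr hm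
  have henergy : ContinuousOn (fun r => fermiSum a a r (R r)) (Set.Ioi 0) := fun r hr =>
    ((h.self ha).continuousAt_fermiSum ha ha hr (R r)).comp_continuousWithinAt
      (f := fun r => (r, R r)) (continuousWithinAt_id.prodMk
        (h.continuousOn_of_fermiSum_eq zero_lt_one ha hR r hr))
  have hlow : fermiSum a a r₀ (R r₀) ≤ n := hn _ (hR r₀ hr₀)
  have hn₀ : 0 ≤ n := (fermiSum_nonneg ha _ _).trans hlow
  obtain ⟨r₁, hr₁, hmean⟩ :=
    h.exists_mul_fermiSum_one_le_fermiSum_self ha (div_nonneg hn₀ hm.le)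
  have hhigh : n ≤ fermiSum a a r₁ (R r₁) := by
    simpa only [hR r₁ hr₁, div_mul_cancel₀ n hm.ne'] using hmean (R r₁)
  obtain ⟨r, hr, hrn⟩ := isPreconnected_Ioi.intermediate_value hr₀ hr₁ henergy ⟨hlow, hhigh⟩
  obtain ⟨i⟩ : Nonempty ι := inferInstance
  obtain ⟨j, hj⟩ := (h.tendsto_cofinite.eventually_gt_atTop (a i)).exists
  refine ⟨(r, R r), ⟨hr, hrn.symm, (hR r hr).symm⟩, fun p hp => ?_⟩
  exact h.injOn_fermiSum ha hj.ne hp.1 hr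
    (Prod.ext (hp.2.1.symm.trans hrn.symm) (hp.2.2.symm.trans (hR r hr).symm))

end FermiSum

section FloorPowers

variable {α r : ℝ}

theorem antitoneOn_exp_neg_mul_rpow (hα : 0 ≤ α) (hr : 0 ≤ r) :
    AntitoneOn (fun x : ℝ => exp (-r * x ^ α)) (Set.Ici 0) := fun x hx y _ hxy => by
  have hpow : x ^ α ≤ y ^ α := rpow_le_rpow hx hxy hα
  simp only [neg_mul]
  gcongr

theorem integrableOn_exp_neg_mul_rpow (hα : 0 < α) (hr : 0 < r) :
    MeasureTheory.IntegrableOn (fun x : ℝ => exp (-r * x ^ α)) (Set.Ioi 0) := by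
  simpa only [rpow_zero, one_mul] using
    integrableOn_rpow_mul_exp_neg_mul_rpow neg_one_lt_zero hα hr

theorem summable_exp_neg_mul_add_one_rpow (hα : 0 < α) (hr : 0 < r) :
    Summable fun j : ℕ => exp (-r * ((j + 1 : ℕ) : ℝ) ^ α) :=
  (summable_nat_add_iff 1).2 <|
    (antitoneOn_exp_neg_mul_rpow hα.le hr.le).summable_of_integrableOn_Ioi_zero
      (integrableOn_exp_neg_mul_rpow hα hr) fun _ _ => (exp_pos _).le

theorem tsum_exp_neg_mul_add_one_rpow_le (hα : 0 < α) (hr : 0 < r) :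
    ∑' j : ℕ, exp (-r * ((j + 1 : ℕ) : ℝ) ^ α) ≤ r ^ (-1 / α) * Gamma (1 / α + 1) := by
  rw [← integral_exp_neg_mul_rpow hα hr]
  exact (antitoneOn_exp_neg_mul_rpow hα.le hr.le).tsum_add_one_le_integral
    (integrableOn_exp_neg_mul_rpow hα hr) fun _ _ => (exp_pos _).le

/-- The sequence `⌊1 ^ α⌋, ⌊2 ^ α⌋, …`, indexed from `0`: the energy levels in which the value `k`
is repeated `g α k` times. -/
noncomputable def floorLevel (α : ℝ) (j : ℕ) : ℝ := (⌊((j : ℝ) + 1) ^ α⌋₊ : ℝ)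

theorem g_eq_card_preimage (α : ℝ) (k : ℕ) :
    g α k = Nat.card ((fun j : ℕ => ⌊((j : ℝ) + 1) ^ α⌋₊) ⁻¹' {k}) := by
  rw [g, Nat.card_coe_set_eq]
  refine Eq.trans ?_ (Set.ncard_image_of_injective _ Nat.succ_injective)
  congr 1
  ext n
  rcases n with _ | j
  · simp
  · have hfloor : ⌊((j : ℝ) + 1) ^ α⌋ = (⌊((j : ℝ) + 1) ^ α⌋₊ : ℤ) :=
      (Int.natCast_floor_eq_floor (by positivity)).symm
    simp [hfloor]

theorem tsum_mul_g_div (w : ℝ → ℝ) {ρ : ℝ}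
    (hs : Summable fun j => w (floorLevel α j) * sigmoid (ρ - floorLevel α j * r)) :
    ∑' k : ℕ, w k * g α k / (exp (k * r - ρ) + 1) =
      fermiSum (w ∘ floorLevel α) (floorLevel α) r ρ := by
  refine Eq.trans ?_ (tsum_card_fiber_mul (fun j : ℕ => ⌊((j : ℝ) + 1) ^ α⌋₊)
    (h := fun k => w k * sigmoid (ρ - k * r)) hs)
  refine tsum_congr fun k => ?_
  rw [← g_eq_card_preimage, div_eq_mul_inv, inv_exp_sub_add_one]
  ring

theorem floorLevel_nonneg (α : ℝ) : 0 ≤ floorLevel α := fun _ => Nat.cast_nonneg _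

theorem exp_neg_floorLevel_mul_le (α : ℝ) (hr : 0 ≤ r) (j : ℕ) :
    exp (-(floorLevel α j * r)) ≤ exp r * exp (-r * ((j + 1 : ℕ) : ℝ) ^ α) := by
  have hfloor : ((j + 1 : ℕ) : ℝ) ^ α ≤ floorLevel α j + 1 := by
    push_cast
    exact (Nat.lt_floor_add_one _).le
  rw [← exp_add, exp_le_exp]
  linarith [mul_le_mul_of_nonneg_left hfloor hr]

theorem summable_exp_neg_floorLevel_mul (hα : 0 < α) (hr : 0 < r) :
    Summable fun j => exp (-(floorLevel α j * r)) :=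
  ((summable_exp_neg_mul_add_one_rpow hα hr).mul_left (exp r)).of_nonneg_of_le
    (fun _ => (exp_pos _).le) (exp_neg_floorLevel_mul_le α hr.le)

theorem boltzmannSummable_one_floorLevel (hα : 0 < α) : BoltzmannSummable 1 (floorLevel α) :=
  fun r hr => by
    simpa only [Pi.one_apply, one_mul] using summable_exp_neg_floorLevel_mul hα hr

theorem tsum_exp_neg_floorLevel_mul_le (hα : 0 < α) (hr : 0 < r) :
    ∑' j, exp (-(floorLevel α j * r)) ≤ exp r * (r ^ (-1 / α) * Gamma (1 / α + 1)) :=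
  calc ∑' j, exp (-(floorLevel α j * r))
      ≤ ∑' j : ℕ, exp r * exp (-r * ((j + 1 : ℕ) : ℝ) ^ α) :=
        (summable_exp_neg_floorLevel_mul hα hr).tsum_le_tsum (exp_neg_floorLevel_mul_le α hr.le)
          ((summable_exp_neg_mul_add_one_rpow hα hr).mul_left _)
    _ = exp r * ∑' j : ℕ, exp (-r * ((j + 1 : ℕ) : ℝ) ^ α) := tsum_mul_left
    _ ≤ exp r * (r ^ (-1 / α) * Gamma (1 / α + 1)) := by
        gcongr
        exact tsum_exp_neg_mul_add_one_rpow_le hα hr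

theorem exists_tsum_floorLevel_mul_exp_le (hα : 0 < α) :
    ∃ C > 0, ∀ r : ℝ, 0 < r → r ≤ 1 →
      ∑' j, floorLevel α j * exp (-(floorLevel α j * r)) ≤ C * r ^ (-1 / α - 1) := by
  refine ⟨2 * (exp 1 * ((1 / 2) ^ (-1 / α) * Gamma (1 / α + 1))), by positivity,
    fun r hr hr₁ => ?_⟩
  calc ∑' j, floorLevel α j * exp (-(floorLevel α j * r))
      ≤ ∑' j, 2 / r * exp (-(floorLevel α j * (r / 2))) :=
        ((boltzmannSummable_one_floorLevel hα).self (floorLevel_nonneg α) r hr).tsum_le_tsum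
          (fun j => mul_exp_neg_mul_le hr _)
          ((summable_exp_neg_floorLevel_mul hα (half_pos hr)).mul_left _)
    _ = 2 / r * ∑' j, exp (-(floorLevel α j * (r / 2))) := tsum_mul_left
    _ ≤ 2 / r * (exp 1 * ((r / 2) ^ (-1 / α) * Gamma (1 / α + 1))) := by
        grw [tsum_exp_neg_floorLevel_mul_le hα (half_pos hr)]
        gcongr
        linarith
    _ = 2 * (exp 1 * ((1 / 2) ^ (-1 / α) * Gamma (1 / α + 1))) * r ^ (-1 / α - 1) := by
        rw [rpow_sub_one hr.ne', div_eq_mul_one_div r 2, mul_rpow hr.le one_half_pos.le]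
        ring

theorem floorLevel_mul_le_one (hα : 0 < α) (hr : 0 < r) {j : ℕ}
    (hj : j < ⌊r ^ (-1 / α)⌋₊) : floorLevel α j * r ≤ 1 := by
  have hj' : (j : ℝ) + 1 ≤ r ^ (-1 / α) := by
    exact_mod_cast (Nat.le_floor_iff (by positivity)).1 hj
  rw [← le_div_iff₀ hr, one_div]
  calc floorLevel α j ≤ ((j : ℝ) + 1) ^ α := Nat.floor_le (by positivity)
    _ ≤ (r ^ (-1 / α)) ^ α := by gcongr
    _ = r⁻¹ := by rw [← rpow_mul hr.le, div_mul_cancel₀ _ hα.ne', rpow_neg_one]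

theorem rpow_mul_sigmoid_le_fermiSum_one_floorLevel (hα : 0 < α) (hr : 0 < r) (hr₁ : r ≤ 1)
    (ρ : ℝ) : r ^ (-1 / α) * sigmoid ρ ≤ 2 * exp 1 * fermiSum 1 (floorLevel α) r ρ := by
  have hone : 1 ≤ r ^ (-1 / α) :=
    one_le_rpow_of_pos_of_le_one_of_nonpos hr hr₁ (by rw [neg_div]; simp [hα.le])
  have hfloor : r ^ (-1 / α) ≤ 2 * ⌊r ^ (-1 / α)⌋₊ := by
    have h₁ : (1 : ℝ) ≤ ⌊r ^ (-1 / α)⌋₊ := by exact_mod_cast Nat.le_floor (by simpa using hone)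
    linarith [Nat.lt_floor_add_one (r ^ (-1 / α))]
  have hcount := (boltzmannSummable_one_floorLevel hα).card_mul_sigmoid_le_fermiSum_one
    (floorLevel_nonneg α) hr ρ (s := Finset.range ⌊r ^ (-1 / α)⌋₊)
    fun j hj => floorLevel_mul_le_one hα hr (Finset.mem_range.1 hj)
  rw [Finset.card_range] at hcount
  calc r ^ (-1 / α) * sigmoid ρ ≤ 2 * ⌊r ^ (-1 / α)⌋₊ * sigmoid ρ := by
        gcongr
        exact sigmoid_nonneg ρ
    _ = 2 * exp 1 * (⌊r ^ (-1 / α)⌋₊ * (exp (-1) * sigmoid ρ)) := by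
        rw [exp_neg]
        field_simp
    _ ≤ 2 * exp 1 * fermiSum 1 (floorLevel α) r ρ := by gcongr

theorem exists_fermiSum_floorLevel_le (hα : 0 < α) :
    ∃ M₀ > 0, ∀ r ρ : ℝ, 0 < r → r ≤ 1 →
      fermiSum 1 (floorLevel α) r ρ ≤ M₀ * r ^ (-1 / α) →
      fermiSum (floorLevel α) (floorLevel α) r ρ ≤ r ^ (-1 / α - 1) := by
  obtain ⟨C, hC, hsum⟩ := exists_tsum_floorLevel_mul_exp_le hα
  refine ⟨(2 * exp 1 * (1 + C))⁻¹, by positivity, fun r ρ hr hr₁ hm => ?_⟩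
  have hsig : sigmoid ρ ≤ (1 + C)⁻¹ := by
    have hpow : 0 < r ^ (-1 / α) := by positivity
    refine le_of_mul_le_mul_left ?_ hpow
    calc r ^ (-1 / α) * sigmoid ρ ≤ 2 * exp 1 * fermiSum 1 (floorLevel α) r ρ :=
          rpow_mul_sigmoid_le_fermiSum_one_floorLevel hα hr hr₁ ρ
      _ ≤ 2 * exp 1 * ((2 * exp 1 * (1 + C))⁻¹ * r ^ (-1 / α)) := by gcongr
      _ = r ^ (-1 / α) * (1 + C)⁻¹ := by field_simp
  have hself := (boltzmannSummable_one_floorLevel hα).self (floorLevel_nonneg α)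
  calc fermiSum (floorLevel α) (floorLevel α) r ρ
      ≤ exp ρ * ∑' j, floorLevel α j * exp (-(floorLevel α j * r)) :=
        hself.fermiSum_le (floorLevel_nonneg α) hr ρ
    _ ≤ C⁻¹ * (C * r ^ (-1 / α - 1)) := by
        gcongr
        · exact tsum_nonneg fun j => mul_nonneg (floorLevel_nonneg α j) (exp_pos _).le
        · exact exp_le_inv_of_sigmoid_le hC hsig
        · exact hsum r hr hr₁
    _ = r ^ (-1 / α - 1) := inv_mul_cancel_left₀ hC.ne' _

theorem saddle_system_iff (hα : 0 < α) (n m : ℝ) (p : ℝ × ℝ) :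
    (0 < p.1 ∧
      n = (∑' k : ℕ, (k : ℝ) * g α k / (exp (k * p.1 - p.2) + 1)) ∧
      m = (∑' k : ℕ, (g α k : ℝ) / (exp (k * p.1 - p.2) + 1))) ↔
    0 < p.1 ∧ n = fermiSum (floorLevel α) (floorLevel α) p.1 p.2 ∧
      m = fermiSum 1 (floorLevel α) p.1 p.2 := by
  have h := boltzmannSummable_one_floorLevel hα
  refine and_congr_right fun hp => ?_
  have henergy := tsum_mul_g_div (fun x => x)
    ((h.self (floorLevel_nonneg α)).summable_mul_sigmoid (floorLevel_nonneg α) hp p.2)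
  have hcount := tsum_mul_g_div (fun _ => 1) (h.summable_mul_sigmoid zero_le_one hp p.2)
  simp only [one_mul] at hcount
  rw [henergy, hcount]
  rfl

end FloorPowers

theorem saddle_point_unique_general (α β : ℝ) (hα : 0 < α) (hβ : β = 1 / α) :
    ∃ M₀ > (0 : ℝ), ∀ n m : ℝ, 1 ≤ n → 0 < m → m ≤ M₀ * n ^ (β / (β + 1)) →
      ∃! p : ℝ × ℝ, 0 < p.1 ∧
        n = (∑' k : ℕ, (k : ℝ) * g α k / (exp (k * p.1 - p.2) + 1)) ∧
        m = (∑' k : ℕ, (g α k : ℝ) / (exp (k * p.1 - p.2) + 1)) := by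
  have hβ₀ : 0 < β := by rw [hβ]; positivity
  obtain ⟨M₀, hM₀, henergy⟩ := exists_fermiSum_floorLevel_le hα
  refine ⟨M₀, hM₀, fun n m hn hm hmn => ?_⟩
  have hn₀ : 0 < n := zero_lt_one.trans_le hn
  have hpow : (n ^ (-(β + 1)⁻¹)) ^ (-1 / α) = n ^ (β / (β + 1)) := by
    rw [← rpow_mul hn₀.le, neg_div, ← hβ]
    ring_nf
  have hpow' : (n ^ (-(β + 1)⁻¹)) ^ (-1 / α - 1) = n := by
    have hexponent : -(β + 1)⁻¹ * (-β - 1) = 1 := by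
      field_simp
      ring
    rw [← rpow_mul hn₀.le, neg_div, ← hβ, hexponent, rpow_one]
  have hr : 0 < n ^ (-(β + 1)⁻¹) := rpow_pos_of_pos hn₀ _
  have hr₁ : n ^ (-(β + 1)⁻¹) ≤ 1 :=
    rpow_le_one_of_one_le_of_nonpos hn (neg_nonpos.2 (by positivity))
  refine (existsUnique_congr (saddle_system_iff hα n m)).2 ?_
  exact (boltzmannSummable_one_floorLevel hα).existsUnique_fermiSum_eq (floorLevel_nonneg α) hm hr
    fun ρ hρ => (henergy _ ρ hr hr₁ (by rwa [hpow, hρ])).trans_eq hpow'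

/-- Proposition (unique saddle point): there is a constant `M₀ > 0` depending only on `β`
such that for each `m, n` with `1 ≤ m ≤ (M₀−ε) n^{β/(β+1)}` (and `n` large) the system
`n = ∑_{k≥1} k g(k)/(e^{kr−ρ}+1)`, `m = ∑_{k≥1} g(k)/(e^{kr−ρ}+1)` has a unique solution
`(r,ρ) ∈ ℝ₊* × ℝ`. -/
theorem saddle_point_unique (α β : ℝ) (hα : 0 < α ∧ α < 1) (hβ : β = 1 / α) :
    ∃ M₀ > (0:ℝ), ∀ ε : ℝ, 0 < ε → ε < M₀ → ∃ n₀ : ℕ, ∀ n : ℕ, n₀ ≤ n →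
      ∀ m : ℕ, 1 ≤ m → (m : ℝ) ≤ (M₀ - ε) * (n : ℝ) ^ (β / (β + 1)) →
      ∃! p : ℝ × ℝ, 0 < p.1 ∧
        (n : ℝ) = (∑' k : ℕ, (k : ℝ) * g α k / (Real.exp (k * p.1 - p.2) + 1)) ∧
        (m : ℝ) = (∑' k : ℕ, (g α k : ℝ) / (Real.exp (k * p.1 - p.2) + 1)) := by
  obtain ⟨M₀, hM₀, h⟩ := saddle_point_unique_general α β hα.1 hβ
  exact ⟨M₀, hM₀, fun ε hε _ => ⟨1, fun n hn m hm hmn => h n m (mod_cast hn) (mod_cast hm)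
    (hmn.trans (by gcongr; linarith))⟩⟩
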